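/- Let C be a cocommutative rack bialgebra and U(C) := T(Č)/J where J = ⟨ i(y_{(1)}).i(x ◁ y_{(2)}) − i(x).i(y) : x, y ∈ C ⟩. Then U(C) is a bialgebra (with coproduct induced from Δ_T), C is a right U(C)-module coalgebra with x · q(y) = x ◁ y, and C is a Yetter-Drinfel'd rack over U(C) via the canonical map q : C → U(C). -/

import Mathlib

open TensorProduct

set_option maxHeartbeats 1000000

/-- A rack bialgebra over a field `k`: a counital coaugmented coalgebra
`(C, Δ, ε, 1)` together with a coalgebra morphism `◁ : C ⊗ C → C`
(given here as a bilinear map `lhd`) which is self-distributive and satisfies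
`x ◁ 1 = x`, `1 ◁ x = ε(x)·1` and `ε(x ◁ y) = ε(x)ε(y)`. -/
structure RackBialgebra (k C : Type) [Field k] [AddCommGroup C] [Module k C] where
  comul : C →ₗ[k] C ⊗[k] C
  counit : C →ₗ[k] k
  one : C
  lhd : C →ₗ[k] C →ₗ[k] C
  coassoc : (TensorProduct.assoc k C C C).toLinearMap ∘ₗ
      TensorProduct.map comul LinearMap.id ∘ₗ comul =
    TensorProduct.map LinearMap.id comul ∘ₗ comul
  counit_comul : (TensorProduct.lid k C).toLinearMap ∘ₗ
      TensorProduct.map counit LinearMap.id ∘ₗ comul = LinearMap.id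
  comul_counit : (TensorProduct.rid k C).toLinearMap ∘ₗ
      TensorProduct.map LinearMap.id counit ∘ₗ comul = LinearMap.id
  comul_one : comul one = one ⊗ₜ[k] one
  counit_one : counit one = 1
  lhd_one : ∀ a, lhd a one = a
  one_lhd : ∀ a, lhd one a = counit a • one
  counit_lhd : ∀ a b, counit (lhd a b) = counit a * counit b
  lhd_coalgebra_morphism : comul ∘ₗ TensorProduct.lift lhd =
    TensorProduct.map (TensorProduct.lift lhd) (TensorProduct.lift lhd) ∘ₗ
      (TensorProduct.tensorTensorTensorComm k C C C C).toLinearMap ∘ₗ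
      TensorProduct.map comul comul
  self_distrib : TensorProduct.lift lhd ∘ₗ
      TensorProduct.map (TensorProduct.lift lhd) LinearMap.id =
    TensorProduct.lift lhd ∘ₗ
      TensorProduct.map (TensorProduct.lift lhd) (TensorProduct.lift lhd) ∘ₗ
      (TensorProduct.tensorTensorTensorComm k C C C C).toLinearMap ∘ₗ
      TensorProduct.map LinearMap.id comul

/-- Cocommutativity of the underlying coalgebra of a rack bialgebra. -/
def RackBialgebra.Cocommutative {k C : Type} [Field k] [AddCommGroup C]
    [Module k C] (R : RackBialgebra k C) : Prop :=
  (TensorProduct.comm k C C).toLinearMap ∘ₗ R.comul = R.comul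

open TensorProduct

variable {k C : Type} [Field k] [AddCommGroup C] [Module k C]

/-- `Č = ker ε`, the kernel of the counit of a rack bialgebra. -/
def Cbar (R : RackBialgebra k C) : Submodule k C := LinearMap.ker R.counit

/-- The canonical projection `C → Č`, `x ↦ x − ε(x)·1`. -/
def pbar (R : RackBialgebra k C) : C →ₗ[k] Cbar R :=
  LinearMap.codRestrict (Cbar R)
    (LinearMap.id - LinearMap.toSpanSingleton k C R.one ∘ₗ R.counit)
    (fun x => by
      simp [Cbar, LinearMap.mem_ker, LinearMap.toSpanSingleton_apply,
        R.counit_one])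

/-- The tensor algebra `T = T(Č)` on `Č = ker ε`. -/
abbrev TT (R : RackBialgebra k C) : Type := TensorAlgebra k (Cbar R)

/-- The canonical linear map `i : C → T(Č)`, the identity on `Č` and sending
the coaugmentation `1 ∈ C` to the scalar `1 ∈ T(Č)`. -/
noncomputable def iT (R : RackBialgebra k C) : C →ₗ[k] TT R :=
  TensorAlgebra.ι k ∘ₗ pbar R + Algebra.linearMap k (TT R) ∘ₗ R.counit

/-- The coproduct on `T = T(Č)`: the unique algebra map `T → T ⊗ T` with
`Δ_T(i(x)) = i(x₁) ⊗ i(x₂)`. -/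
noncomputable def comulT (R : RackBialgebra k C) : TT R →ₐ[k] TT R ⊗[k] TT R :=
  TensorAlgebra.lift k
    (TensorProduct.map (iT R) (iT R) ∘ₗ R.comul ∘ₗ (Cbar R).subtype)

/-- The counit on `T = T(Č)`: the unique algebra map `T → k` vanishing
on `Č`. -/
noncomputable def counitT (R : RackBialgebra k C) : TT R →ₐ[k] k :=
  TensorAlgebra.lift k (0 : Cbar R →ₗ[k] k)

/-- The element `i(y₁).i(x ◁ y₂)` of `T(Č)`, as a linear map in `x ⊗ y`. -/
noncomputable def gen1 (R : RackBialgebra k C) : C ⊗[k] C →ₗ[k] TT R :=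
  LinearMap.mul' k (TT R) ∘ₗ
    TensorProduct.map (iT R) (iT R ∘ₗ TensorProduct.lift R.lhd) ∘ₗ
    (TensorProduct.leftComm k C C C).toLinearMap ∘ₗ
    TensorProduct.map LinearMap.id R.comul

/-- The element `i(x).i(y)` of `T(Č)`, as a linear map in `x ⊗ y`. -/
noncomputable def gen2 (R : RackBialgebra k C) : C ⊗[k] C →ₗ[k] TT R :=
  LinearMap.mul' k (TT R) ∘ₗ TensorProduct.map (iT R) (iT R)

/-- The two-sided ideal `J` of `T(Č)` generated by the elements
`i(y₁).i(x ◁ y₂) − i(x).i(y)` for `x, y ∈ C`, as a `k`-submodule. -/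
noncomputable def idealJ (R : RackBialgebra k C) : Submodule k (TT R) :=
  Submodule.span k
    {t | ∃ (a b : TT R) (c : C ⊗[k] C), t = a * (gen1 R c - gen2 R c) * b}


/-- The relation on `T(Č)` identifying `i(y₁).i(x ◁ y₂)` with `i(x).i(y)`. -/
noncomputable def relU (R : RackBialgebra k C) : TT R → TT R → Prop :=
  fun s t => ∃ c : C ⊗[k] C, s = gen1 R c ∧ t = gen2 R c

/-- The universal enveloping algebra `U(C) = T(Č)/J`. -/
abbrev UC (R : RackBialgebra k C) : Type := RingQuot (relU R)

/-- The canonical map `q : C → U(C)`. -/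
noncomputable def qU (R : RackBialgebra k C) : C →ₗ[k] UC R :=
  (RingQuot.mkAlgHom k (relU R)).toLinearMap ∘ₗ iT R

/-! ### Helper lemmas -/

theorem ydAux_pbar (R : RackBialgebra k C) (x : C) :
    (pbar R x : C) = x - R.counit x • R.one := rfl

theorem ydAux_iT_one (R : RackBialgebra k C) : iT R R.one = 1 := by
  have h : pbar R R.one = 0 := by
    apply Subtype.ext
    simp [ydAux_pbar, R.counit_one]
  simp [iT, h, R.counit_one]

theorem ydAux_iT_bar (R : RackBialgebra k C) (c : Cbar R) :
    iT R c = TensorAlgebra.ι k c := by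
  have hc : R.counit c = 0 := c.2
  have h : pbar R c = c := by
    apply Subtype.ext
    simp [ydAux_pbar, hc]
  simp [iT, h, hc]

theorem ydAux_decomp (R : RackBialgebra k C) (x : C) :
    x = (pbar R x : C) + R.counit x • R.one := by
  rw [ydAux_pbar, sub_add_cancel]

/-- A linear map out of `C` is determined by its values on `Č` and on `1`. -/
theorem ydAux_ext {M : Type*} [AddCommGroup M] [Module k M] (R : RackBialgebra k C)
    {f g : C →ₗ[k] M} (h1 : f R.one = g R.one) (h2 : ∀ c : Cbar R, f c = g c) : f = g := by
  ext x
  rw [ydAux_decomp R x]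
  simp only [map_add, map_smul, h1, h2]

theorem ydAux_lift_iT {A : Type*} [Ring A] [Algebra k A] (R : RackBialgebra k C)
    (f : C →ₗ[k] A) (h1 : f R.one = 1) (x : C) :
    TensorAlgebra.lift k (f ∘ₗ (Cbar R).subtype) (iT R x) = f x := by
  have : (TensorAlgebra.lift k (f ∘ₗ (Cbar R).subtype)).toLinearMap ∘ₗ iT R = f := by
    apply ydAux_ext R
    · simp [ydAux_iT_one, h1]
    · intro c
      simp [ydAux_iT_bar]
  exact LinearMap.congr_fun this x

theorem ydAux_comulT (R : RackBialgebra k C) (x : C) :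
    comulT R (iT R x) = TensorProduct.map (iT R) (iT R) (R.comul x) :=
  ydAux_lift_iT R (TensorProduct.map (iT R) (iT R) ∘ₗ R.comul)
    (by simp [R.comul_one, ydAux_iT_one, Algebra.TensorProduct.one_def]) x

theorem ydAux_counitT (R : RackBialgebra k C) (x : C) :
    counitT R (iT R x) = R.counit x := by
  have h : (0 : Cbar R →ₗ[k] k) = R.counit ∘ₗ (Cbar R).subtype := by
    ext c
    exact (show R.counit c = 0 from c.2).symm
  unfold counitT
  rw [h]
  exact ydAux_lift_iT R R.counit R.counit_one x

theorem ydAux_qU (R : RackBialgebra k C) (x : C) :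
    qU R x = RingQuot.mkAlgHom k (relU R) (iT R x) := rfl

theorem ydAux_qU_one (R : RackBialgebra k C) : qU R R.one = 1 := by
  rw [ydAux_qU, ydAux_iT_one, map_one]

theorem ydAux_induction (R : RackBialgebra k C) {P : UC R → Prop}
    (hs : ∀ r : k, P (algebraMap k (UC R) r)) (hq : ∀ x : C, P (qU R x))
    (hm : ∀ a b, P a → P b → P (a * b)) (ha : ∀ a b, P a → P b → P (a + b))
    (u : UC R) : P u := by
  obtain ⟨t, rfl⟩ := RingQuot.mkAlgHom_surjective k (relU R) u
  induction t using TensorAlgebra.induction with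
  | algebraMap r => rw [AlgHom.commutes]; exact hs r
  | ι x => rw [← ydAux_iT_bar]; exact hq x
  | mul a b iha ihb => rw [map_mul]; exact hm _ _ iha ihb
  | add a b iha ihb => rw [map_add]; exact ha _ _ iha ihb

theorem ydAux_hom_ext {A : Type*} [Semiring A] [Algebra k A] (R : RackBialgebra k C)
    {f g : UC R →ₐ[k] A} (h : ∀ x, f (qU R x) = g (qU R x)) : f = g := by
  apply AlgHom.ext
  intro u
  induction u using ydAux_induction with
  | hs r => simp
  | hq x => exact h x
  | hm a b iha ihb => rw [map_mul, map_mul, iha, ihb]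
  | ha a b iha ihb => rw [map_add, map_add, iha, ihb]

/-- The element `q(a) q(x ◁ c)` as a linear function of `x ⊗ (a ⊗ c)`. -/
noncomputable def ydAuxP (R : RackBialgebra k C) : C ⊗[k] (C ⊗[k] C) →ₗ[k] UC R :=
  LinearMap.mul' k (UC R) ∘ₗ
    TensorProduct.map (qU R) (qU R ∘ₗ TensorProduct.lift R.lhd) ∘ₗ
    (TensorProduct.leftComm k C C C).toLinearMap

theorem ydAuxP_tmul (R : RackBialgebra k C) (x a c : C) :
    ydAuxP R (x ⊗ₜ (a ⊗ₜ c)) = qU R a * qU R (R.lhd x c) := by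
  simp [ydAuxP]

theorem ydAux_rel (R : RackBialgebra k C) (x y : C) :
    ydAuxP R (x ⊗ₜ R.comul y) = qU R x * qU R y := by
  have h := RingQuot.mkAlgHom_rel k (s := relU R)
    (show relU R (gen1 R (x ⊗ₜ y)) (gen2 R (x ⊗ₜ y)) from ⟨_, rfl, rfl⟩)
  have h2 : RingQuot.mkAlgHom k (relU R) (gen2 R (x ⊗ₜ y)) = qU R x * qU R y := by
    simp [gen2, ydAux_qU]
  rw [h2] at h
  rw [← h]
  have h1 : gen1 R (x ⊗ₜ y) = LinearMap.mul' k (TT R)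
    (TensorProduct.map (iT R) (iT R ∘ₗ TensorProduct.lift R.lhd)
      (TensorProduct.leftComm k C C C (x ⊗ₜ R.comul y))) := by simp [gen1]
  rw [h1]
  induction R.comul y with
  | zero => simp
  | tmul a c => simp [ydAuxP_tmul, ydAux_qU]
  | add s t hs ht => simp only [TensorProduct.tmul_add, map_add, hs, ht]

/-- The Mathlib coalgebra underlying a rack bialgebra. -/
@[reducible] noncomputable def ydAuxCoalgebra (R : RackBialgebra k C) : Coalgebra k C where
  comul := R.comul
  counit := R.counit
  coassoc := R.coassoc
  rTensor_counit_comp_comul := by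
    ext x
    have := LinearMap.congr_fun R.counit_comul x
    apply (TensorProduct.lid k C).injective
    simpa [LinearMap.rTensor, LinearMap.lTensor] using this
  lTensor_counit_comp_comul := by
    ext x
    have := LinearMap.congr_fun R.comul_counit x
    apply (TensorProduct.rid k C).injective
    simpa [LinearMap.rTensor, LinearMap.lTensor] using this

theorem ydAux_cocomm (R : RackBialgebra k C) (cocomm : R.Cocommutative) (y : C) :
    TensorProduct.tensorTensorTensorComm k C C C C
      (TensorProduct.map R.comul R.comul (R.comul y)) =
    TensorProduct.map R.comul R.comul (R.comul y) := by
  let _ := ydAuxCoalgebra R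
  have : Coalgebra.IsCocomm k C := ⟨cocomm⟩
  exact (LinearMap.congr_fun (Coalgebra.comulCoalgHom k C).map_comp_comul y).symm

theorem ydAux_comul_lhd (R : RackBialgebra k C) (x y : C) :
    R.comul (R.lhd x y) = TensorProduct.map (TensorProduct.lift R.lhd) (TensorProduct.lift R.lhd)
      (TensorProduct.tensorTensorTensorComm k C C C C (R.comul x ⊗ₜ R.comul y)) := by
  simpa using LinearMap.congr_fun R.lhd_coalgebra_morphism (x ⊗ₜ y)

/-- The algebra map `T → U ⊗ U`. -/
noncomputable def ydAuxPhi (R : RackBialgebra k C) : TT R →ₐ[k] UC R ⊗[k] UC R :=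
  (Algebra.TensorProduct.map (RingQuot.mkAlgHom k (relU R)) (RingQuot.mkAlgHom k (relU R))).comp
    (comulT R)

theorem ydAuxPhi_iT (R : RackBialgebra k C) (x : C) :
    ydAuxPhi R (iT R x) = TensorProduct.map (qU R) (qU R) (R.comul x) := by
  simp only [ydAuxPhi, AlgHom.comp_apply, ydAux_comulT]
  induction R.comul x with
  | zero => simp
  | tmul a c => simp [ydAux_qU]
  | add s t hs ht => simp only [map_add, hs, ht]

theorem ydAux_aux1 (R : RackBialgebra k C) (X s t : C ⊗[k] C) :
    TensorProduct.map (qU R) (qU R) s * TensorProduct.map (qU R) (qU R)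
      (TensorProduct.map (TensorProduct.lift R.lhd) (TensorProduct.lift R.lhd)
      (TensorProduct.tensorTensorTensorComm k C C C C (X ⊗ₜ t))) =
    TensorProduct.map (ydAuxP R) (ydAuxP R)
      (TensorProduct.tensorTensorTensorComm k C C (C ⊗[k] C) (C ⊗[k] C)
        (X ⊗ₜ TensorProduct.tensorTensorTensorComm k C C C C (s ⊗ₜ t))) := by
  induction X with
  | zero => simp
  | add X Y hX hY => simp only [TensorProduct.add_tmul, map_add, mul_add, hX, hY]
  | tmul x x' =>
    induction s with
    | zero => simp
    | add X Y hX hY =>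
      simp only [TensorProduct.add_tmul, TensorProduct.tmul_add, map_add, add_mul, hX, hY]
    | tmul a a' =>
      induction t with
      | zero => simp
      | add X Y hX hY =>
        simp only [TensorProduct.tmul_add, map_add, mul_add, hX, hY]
      | tmul c c' => simp [ydAuxP_tmul]

theorem ydAux_aux2 (R : RackBialgebra k C) (X Y : C ⊗[k] C) :
    TensorProduct.map (ydAuxP R) (ydAuxP R)
      (TensorProduct.tensorTensorTensorComm k C C (C ⊗[k] C) (C ⊗[k] C)
        (X ⊗ₜ TensorProduct.map R.comul R.comul Y)) =
    TensorProduct.map (qU R) (qU R) X * TensorProduct.map (qU R) (qU R) Y := by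
  induction X with
  | zero => simp
  | add X Y hX hY => simp only [TensorProduct.add_tmul, map_add, add_mul, hX, hY]
  | tmul x x' =>
    induction Y with
    | zero => simp
    | add X Y hX hY =>
      simp only [TensorProduct.tmul_add, map_add, mul_add, hX, hY]
    | tmul y y' => simp [ydAux_rel]

theorem ydAuxPhi_gen (R : RackBialgebra k C) (cocomm : R.Cocommutative) (c : C ⊗[k] C) :
    ydAuxPhi R (gen1 R c) = ydAuxPhi R (gen2 R c) := by
  induction c with
  | zero => simp
  | add s t hs ht => simp only [map_add, hs, ht]
  | tmul x y =>
    have h2 : ydAuxPhi R (gen2 R (x ⊗ₜ y)) = TensorProduct.map (qU R) (qU R) (R.comul x) *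
        TensorProduct.map (qU R) (qU R) (R.comul y) := by
      simp [gen2, ydAuxPhi_iT]
    have h1 : gen1 R (x ⊗ₜ y) = LinearMap.mul' k (TT R)
      (TensorProduct.map (iT R) (iT R ∘ₗ TensorProduct.lift R.lhd)
        (TensorProduct.leftComm k C C C (x ⊗ₜ R.comul y))) := by simp [gen1]
    rw [h2, ← ydAux_aux2, ← ydAux_cocomm R cocomm, h1]
    induction R.comul y with
    | zero => simp
    | add s t hs ht => simp only [TensorProduct.tmul_add, map_add, hs, ht]
    | tmul a b =>
      rw [TensorProduct.map_tmul, ← ydAux_aux1, ← ydAux_comul_lhd]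
      simp [ydAuxPhi_iT]

/-- The coproduct of `U(C)`. -/
noncomputable def ydAuxComulU (R : RackBialgebra k C) (cocomm : R.Cocommutative) :
    UC R →ₐ[k] UC R ⊗[k] UC R :=
  RingQuot.liftAlgHom k ⟨ydAuxPhi R, by
    rintro _ _ ⟨c, rfl, rfl⟩
    exact ydAuxPhi_gen R cocomm c⟩

theorem ydAuxComulU_mk (R : RackBialgebra k C) (cocomm : R.Cocommutative) (t : TT R) :
    ydAuxComulU R cocomm (RingQuot.mkAlgHom k (relU R) t) = ydAuxPhi R t :=
  RingQuot.liftAlgHom_mkAlgHom_apply k _ _ _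

theorem ydAuxComulU_qU (R : RackBialgebra k C) (cocomm : R.Cocommutative) (x : C) :
    ydAuxComulU R cocomm (qU R x) = TensorProduct.map (qU R) (qU R) (R.comul x) := by
  rw [ydAux_qU, ydAuxComulU_mk, ydAuxPhi_iT]

theorem ydAux_counit_sum (R : RackBialgebra k C) (x : C) :
    (TensorProduct.lid k C) (TensorProduct.map R.counit LinearMap.id (R.comul x)) = x :=
  LinearMap.congr_fun R.counit_comul x

theorem ydAux_sum_counit (R : RackBialgebra k C) (x : C) :
    (TensorProduct.rid k C) (TensorProduct.map LinearMap.id R.counit (R.comul x)) = x :=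
  LinearMap.congr_fun R.comul_counit x

theorem ydAux_counitT_gen (R : RackBialgebra k C) (c : C ⊗[k] C) :
    counitT R (gen1 R c) = counitT R (gen2 R c) := by
  induction c with
  | zero => simp
  | add s t hs ht => simp only [map_add, hs, ht]
  | tmul x y =>
    have h2 : counitT R (gen2 R (x ⊗ₜ y)) = R.counit x * R.counit y := by
      simp [gen2, ydAux_counitT]
    have h1 : gen1 R (x ⊗ₜ y) = LinearMap.mul' k (TT R)
      (TensorProduct.map (iT R) (iT R ∘ₗ TensorProduct.lift R.lhd)
        (TensorProduct.leftComm k C C C (x ⊗ₜ R.comul y))) := by simp [gen1]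
    rw [h2, h1]
    conv_rhs => rw [← ydAux_counit_sum R y]
    induction R.comul y with
    | zero => simp
    | add s t hs ht => simp only [TensorProduct.tmul_add, map_add, mul_add, hs, ht]
    | tmul a b =>
      simp [ydAux_counitT, R.counit_lhd]
      ring

/-- The counit of `U(C)`. -/
noncomputable def ydAuxCounitU (R : RackBialgebra k C) : UC R →ₐ[k] k :=
  RingQuot.liftAlgHom k ⟨counitT R, by
    rintro _ _ ⟨c, rfl, rfl⟩
    exact ydAux_counitT_gen R c⟩

theorem ydAuxCounitU_mk (R : RackBialgebra k C) (t : TT R) :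
    ydAuxCounitU R (RingQuot.mkAlgHom k (relU R) t) = counitT R t :=
  RingQuot.liftAlgHom_mkAlgHom_apply k _ _ _

theorem ydAuxCounitU_qU (R : RackBialgebra k C) (x : C) :
    ydAuxCounitU R (qU R x) = R.counit x := by
  rw [ydAux_qU, ydAuxCounitU_mk, ydAux_counitT]

/-- Right multiplication `y ↦ (x ↦ x ◁ y)` as a map to the opposite endomorphism algebra. -/
noncomputable def ydAuxRho (R : RackBialgebra k C) : C →ₗ[k] (Module.End k C)ᵐᵒᵖ :=
  (MulOpposite.opLinearEquiv k).toLinearMap ∘ₗ R.lhd.flip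

theorem ydAux_selfdistrib (R : RackBialgebra k C) (z x y : C) :
    R.lhd (R.lhd z x) y = TensorProduct.lift R.lhd
      (TensorProduct.map (TensorProduct.lift R.lhd) (TensorProduct.lift R.lhd)
      (TensorProduct.tensorTensorTensorComm k C C C C ((z ⊗ₜ x) ⊗ₜ R.comul y))) := by
  simpa using LinearMap.congr_fun R.self_distrib ((z ⊗ₜ x) ⊗ₜ y)

/-- The right action of `T` on `C`. -/
noncomputable def ydAuxActT (R : RackBialgebra k C) : TT R →ₐ[k] (Module.End k C)ᵐᵒᵖ :=
  TensorAlgebra.lift k (ydAuxRho R ∘ₗ (Cbar R).subtype)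

theorem ydAuxActT_iT (R : RackBialgebra k C) (y : C) :
    ydAuxActT R (iT R y) = MulOpposite.op (R.lhd.flip y) :=
  ydAux_lift_iT R (ydAuxRho R) (by
    apply MulOpposite.unop_injective
    ext x
    simp [ydAuxRho, R.lhd_one]) y

theorem ydAuxActT_gen (R : RackBialgebra k C) (c : C ⊗[k] C) :
    ydAuxActT R (gen1 R c) = ydAuxActT R (gen2 R c) := by
  induction c with
  | zero => simp
  | add s t hs ht => simp only [map_add, hs, ht]
  | tmul x y =>
    apply MulOpposite.unop_injective
    ext z
    have h2 : (ydAuxActT R (gen2 R (x ⊗ₜ y))).unop z = R.lhd (R.lhd z x) y := by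
      simp [gen2, ydAuxActT_iT]
    have h1 : gen1 R (x ⊗ₜ y) = LinearMap.mul' k (TT R)
      (TensorProduct.map (iT R) (iT R ∘ₗ TensorProduct.lift R.lhd)
        (TensorProduct.leftComm k C C C (x ⊗ₜ R.comul y))) := by simp [gen1]
    rw [h2, h1, ydAux_selfdistrib]
    induction R.comul y with
    | zero => simp
    | add s t hs ht =>
      simp only [TensorProduct.tmul_add, map_add, MulOpposite.unop_add, LinearMap.add_apply,
        hs, ht]
    | tmul a b => simp [ydAuxActT_iT]

/-- The right action of `U(C)` on `C`, as an algebra map. -/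
noncomputable def ydAuxActU (R : RackBialgebra k C) : UC R →ₐ[k] (Module.End k C)ᵐᵒᵖ :=
  RingQuot.liftAlgHom k ⟨ydAuxActT R, by
    rintro _ _ ⟨c, rfl, rfl⟩
    exact ydAuxActT_gen R c⟩

/-- The right action of `U(C)` on `C`. -/
noncomputable def ydAuxAct (R : RackBialgebra k C) : C →ₗ[k] UC R →ₗ[k] C :=
  ((MulOpposite.opLinearEquiv k).symm.toLinearMap ∘ₗ (ydAuxActU R).toLinearMap).flip

theorem ydAuxAct_apply (R : RackBialgebra k C) (x : C) (u : UC R) :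
    ydAuxAct R x u = (ydAuxActU R u).unop x := rfl

theorem ydAuxAct_qU (R : RackBialgebra k C) (x y : C) :
    ydAuxAct R x (qU R y) = R.lhd x y := by
  rw [ydAuxAct_apply, ydAux_qU, ydAuxActU, RingQuot.liftAlgHom_mkAlgHom_apply, ydAuxActT_iT]
  rfl

theorem ydAuxAct_one (R : RackBialgebra k C) (x : C) : ydAuxAct R x 1 = x := by
  simp [ydAuxAct_apply]

theorem ydAuxAct_mul (R : RackBialgebra k C) (x : C) (g h : UC R) :
    ydAuxAct R x (g * h) = ydAuxAct R (ydAuxAct R x g) h := by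
  simp [ydAuxAct_apply]

theorem ydAuxAct_algebraMap (R : RackBialgebra k C) (x : C) (r : k) :
    ydAuxAct R x (algebraMap k (UC R) r) = r • x := by
  rw [Algebra.algebraMap_eq_smul_one, map_smul, ydAuxAct_one]

/-- The componentwise action of `U ⊗ U` on `C ⊗ C`. -/
noncomputable def ydAuxAct2 (R : RackBialgebra k C) (X : C ⊗[k] C) (w : UC R ⊗[k] UC R) :
    C ⊗[k] C :=
  TensorProduct.map (TensorProduct.lift (ydAuxAct R)) (TensorProduct.lift (ydAuxAct R))
    (TensorProduct.tensorTensorTensorComm k C C (UC R) (UC R) (X ⊗ₜ w))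

theorem ydAuxAct2_tmul (R : RackBialgebra k C) (x y : C) (g h : UC R) :
    ydAuxAct2 R (x ⊗ₜ y) (g ⊗ₜ h) = ydAuxAct R x g ⊗ₜ ydAuxAct R y h := by
  simp [ydAuxAct2]

theorem ydAuxAct2_add_left (R : RackBialgebra k C) (X Y : C ⊗[k] C) (w : UC R ⊗[k] UC R) :
    ydAuxAct2 R (X + Y) w = ydAuxAct2 R X w + ydAuxAct2 R Y w := by
  simp only [ydAuxAct2, TensorProduct.add_tmul, map_add]

theorem ydAuxAct2_add_right (R : RackBialgebra k C) (X : C ⊗[k] C) (w v : UC R ⊗[k] UC R) :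
    ydAuxAct2 R X (w + v) = ydAuxAct2 R X w + ydAuxAct2 R X v := by
  simp only [ydAuxAct2, TensorProduct.tmul_add, map_add]

theorem ydAuxAct2_zero_left (R : RackBialgebra k C) (w : UC R ⊗[k] UC R) :
    ydAuxAct2 R 0 w = 0 := by
  simp [ydAuxAct2]

theorem ydAuxAct2_zero_right (R : RackBialgebra k C) (X : C ⊗[k] C) :
    ydAuxAct2 R X 0 = 0 := by
  simp [ydAuxAct2]

theorem ydAuxAct2_mul (R : RackBialgebra k C) (X : C ⊗[k] C) (w v : UC R ⊗[k] UC R) :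
    ydAuxAct2 R X (w * v) = ydAuxAct2 R (ydAuxAct2 R X w) v := by
  induction X with
  | zero => simp only [ydAuxAct2_zero_left]
  | add X Y hX hY => simp only [ydAuxAct2_add_left, hX, hY]
  | tmul x y =>
    induction w with
    | zero => simp only [zero_mul, ydAuxAct2_zero_right, ydAuxAct2_zero_left]
    | add X Y hX hY => simp only [add_mul, ydAuxAct2_add_left, ydAuxAct2_add_right, hX, hY]
    | tmul a b =>
      induction v with
      | zero => simp only [mul_zero, ydAuxAct2_zero_right]
      | add X Y hX hY => simp only [mul_add, ydAuxAct2_add_right, hX, hY]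
      | tmul c d =>
        simp only [Algebra.TensorProduct.tmul_mul_tmul, ydAuxAct2_tmul, ydAuxAct_mul]

theorem ydAuxAct2_qU (R : RackBialgebra k C) (X Y : C ⊗[k] C) :
    ydAuxAct2 R X (TensorProduct.map (qU R) (qU R) Y) =
    TensorProduct.map (TensorProduct.lift R.lhd) (TensorProduct.lift R.lhd)
      (TensorProduct.tensorTensorTensorComm k C C C C (X ⊗ₜ Y)) := by
  induction X with
  | zero => simp [ydAuxAct2]
  | add X Y hX hY => simp only [ydAuxAct2_add_left, TensorProduct.add_tmul, map_add, hX, hY]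
  | tmul x y =>
    induction Y with
    | zero => simp [ydAuxAct2]
    | add X Y hX hY => simp only [ydAuxAct2_add_right, TensorProduct.tmul_add, map_add, hX, hY]
    | tmul a b => simp [ydAuxAct2_tmul, ydAuxAct_qU]

theorem ydAuxAct2_algebraMap (R : RackBialgebra k C) (X : C ⊗[k] C) (r : k) :
    ydAuxAct2 R X (algebraMap k (UC R ⊗[k] UC R) r) = r • X := by
  induction X with
  | zero => simp [ydAuxAct2]
  | add X Y hX hY => simp only [ydAuxAct2_add_left, smul_add, hX, hY]
  | tmul x y =>
    rw [Algebra.TensorProduct.algebraMap_apply, ydAuxAct2_tmul, ydAuxAct_one,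
      ydAuxAct_algebraMap, TensorProduct.smul_tmul']

theorem ydAux_module_coalgebra (R : RackBialgebra k C) (cocomm : R.Cocommutative) (x : C)
    (h : UC R) :
    R.comul (ydAuxAct R x h) = ydAuxAct2 R (R.comul x) (ydAuxComulU R cocomm h) := by
  induction h using ydAux_induction generalizing x with
  | hs r => rw [AlgHom.commutes, ydAuxAct2_algebraMap, ydAuxAct_algebraMap, map_smul]
  | hq y => rw [ydAuxComulU_qU, ydAuxAct2_qU, ydAuxAct_qU, ydAux_comul_lhd]
  | hm a b iha ihb => rw [ydAuxAct_mul, map_mul, ydAuxAct2_mul, ← iha, ← ihb]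
  | ha a b iha ihb => rw [map_add, map_add, map_add, ydAuxAct2_add_right, iha, ihb]

theorem ydAux_counit_act (R : RackBialgebra k C) (x : C) (h : UC R) :
    R.counit (ydAuxAct R x h) = R.counit x * ydAuxCounitU R h := by
  induction h using ydAux_induction generalizing x with
  | hs r => rw [AlgHom.commutes, ydAuxAct_algebraMap, map_smul, smul_eq_mul, mul_comm]; rfl
  | hq y => rw [ydAuxCounitU_qU, ydAuxAct_qU, R.counit_lhd]
  | hm a b iha ihb => rw [ydAuxAct_mul, map_mul, ihb, iha, mul_assoc]
  | ha a b iha ihb => rw [map_add, map_add, map_add, iha, ihb, mul_add]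

/-- The map `u ⊗ v ↦ u q(a · v)`. -/
noncomputable def ydAuxTheta (R : RackBialgebra k C) (a : C) : UC R ⊗[k] UC R →ₗ[k] UC R :=
  LinearMap.mul' k (UC R) ∘ₗ TensorProduct.map LinearMap.id (qU R ∘ₗ ydAuxAct R a)

theorem ydAuxTheta_tmul (R : RackBialgebra k C) (a : C) (u v : UC R) :
    ydAuxTheta R a (u ⊗ₜ v) = u * qU R (ydAuxAct R a v) := by
  simp [ydAuxTheta]

theorem ydAuxTheta_tmul_mul (R : RackBialgebra k C) (a : C) (u v : UC R)
    (w : UC R ⊗[k] UC R) :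
    ydAuxTheta R a ((u ⊗ₜ v) * w) = u * ydAuxTheta R (ydAuxAct R a v) w := by
  induction w with
  | zero => simp
  | add X Y hX hY => simp only [mul_add, map_add, hX, hY]
  | tmul c d =>
    rw [Algebra.TensorProduct.tmul_mul_tmul, ydAuxTheta_tmul, ydAuxTheta_tmul, ydAuxAct_mul,
      mul_assoc]

theorem ydAux_yd (R : RackBialgebra k C) (cocomm : R.Cocommutative) (a : C) (h : UC R) :
    ydAuxTheta R a (ydAuxComulU R cocomm h) = qU R a * h := by
  induction h using ydAux_induction generalizing a with
  | hs r =>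
    rw [AlgHom.commutes, Algebra.TensorProduct.algebraMap_apply, ydAuxTheta_tmul, ydAuxAct_one,
      Algebra.commutes]
  | hq y =>
    rw [ydAuxComulU_qU, ← ydAux_rel]
    induction R.comul y with
    | zero => simp
    | add X Y hX hY => simp only [TensorProduct.tmul_add, map_add, hX, hY]
    | tmul c d => simp [ydAuxTheta_tmul, ydAuxP_tmul, ydAuxAct_qU]
  | hm g h ihg ihh =>
    rw [map_mul, ← mul_assoc, ← ihg]
    induction ydAuxComulU R cocomm g with
    | zero => simp
    | add X Y hX hY => simp only [add_mul, map_add, hX, hY]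
    | tmul c d => rw [ydAuxTheta_tmul_mul, ihh, ydAuxTheta_tmul, mul_assoc]
  | ha g h ihg ihh => rw [map_add, map_add, ihg, ihh, mul_add]

/-- for a cocommutative rack bialgebra `C`, the universal
enveloping algebra `U(C) = T(Č)/J` is a bialgebra with coproduct induced by
`Δ_T`, `C` is a right `U(C)`-module coalgebra with `x · q(y) = x ◁ y`, and `C`
is a Yetter-Drinfel'd rack over `U(C)` via the canonical map `q`. -/
theorem UC_bialgebra_and_yd_rack (R : RackBialgebra k C)
    (cocomm : R.Cocommutative) :
    ∃ (comulU : UC R →ₐ[k] UC R ⊗[k] UC R) (counitU : UC R →ₐ[k] k),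
      -- the coproduct and counit of `U(C)` are induced from those of `T(Č)`
      (comulU.toLinearMap ∘ₗ (RingQuot.mkAlgHom k (relU R)).toLinearMap =
        TensorProduct.map (RingQuot.mkAlgHom k (relU R)).toLinearMap
            (RingQuot.mkAlgHom k (relU R)).toLinearMap ∘ₗ
          (comulT R).toLinearMap) ∧
      (counitU.toLinearMap ∘ₗ (RingQuot.mkAlgHom k (relU R)).toLinearMap =
        (counitT R).toLinearMap) ∧
      -- `U(C)` is a bialgebra: `Δ_U` is coassociative and counital
      ((TensorProduct.assoc k (UC R) (UC R) (UC R)).toLinearMap ∘ₗ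
          TensorProduct.map comulU.toLinearMap LinearMap.id ∘ₗ
          comulU.toLinearMap =
        TensorProduct.map LinearMap.id comulU.toLinearMap ∘ₗ
          comulU.toLinearMap) ∧
      ((TensorProduct.lid k (UC R)).toLinearMap ∘ₗ
          TensorProduct.map counitU.toLinearMap LinearMap.id ∘ₗ
          comulU.toLinearMap = LinearMap.id) ∧
      ((TensorProduct.rid k (UC R)).toLinearMap ∘ₗ
          TensorProduct.map LinearMap.id counitU.toLinearMap ∘ₗ
          comulU.toLinearMap = LinearMap.id) ∧
      -- `q : C → U(C)` is a morphism of counital coaugmented coalgebras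
      (comulU.toLinearMap ∘ₗ qU R =
        TensorProduct.map (qU R) (qU R) ∘ₗ R.comul) ∧
      (counitU.toLinearMap ∘ₗ qU R = R.counit) ∧
      (qU R R.one = 1) ∧
      -- `C` is a right `U(C)`-module coalgebra and a Yetter-Drinfel'd rack
      ∃ act : C →ₗ[k] UC R →ₗ[k] C,
        (∀ x : C, act x (1 : UC R) = x) ∧
        (∀ (x : C) (g h : UC R), act (act x g) h = act x (g * h)) ∧
        -- `x · q(y) = x ◁ y`
        (∀ x y : C, act x (qU R y) = R.lhd x y) ∧
        -- `C` is a `U(C)`-module coalgebra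
        (R.comul ∘ₗ TensorProduct.lift act =
          TensorProduct.map (TensorProduct.lift act)
              (TensorProduct.lift act) ∘ₗ
            (TensorProduct.tensorTensorTensorComm k C C (UC R)
              (UC R)).toLinearMap ∘ₗ
            TensorProduct.map R.comul comulU.toLinearMap) ∧
        (∀ (x : C) (h : UC R), R.counit (act x h) = R.counit x * counitU h) ∧
        -- condition (d): `h₁ q(a · h₂) = q(a) h`
        (LinearMap.mul' k (UC R) ∘ₗ
            TensorProduct.map LinearMap.id (qU R ∘ₗ TensorProduct.lift act) ∘ₗ
            (TensorProduct.leftComm k C (UC R) (UC R)).toLinearMap ∘ₗ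
            TensorProduct.map LinearMap.id comulU.toLinearMap =
          LinearMap.mul' k (UC R) ∘ₗ
            TensorProduct.map (qU R) LinearMap.id) := by
  have hΔ := ydAuxComulU_qU R cocomm
  refine ⟨ydAuxComulU R cocomm, ydAuxCounitU R, ?_, ?_, ?_, ?_, ?_, ?_, ?_, ydAux_qU_one R,
    ydAuxAct R, ydAuxAct_one R, fun x g h => (ydAuxAct_mul R x g h).symm, ydAuxAct_qU R,
    ?_, ydAux_counit_act R, ?_⟩
  · ext1 t
    exact ydAuxComulU_mk R cocomm t
  · ext1 t
    exact ydAuxCounitU_mk R t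
  · have : ((Algebra.TensorProduct.assoc k k k (UC R) (UC R) (UC R)).toAlgHom.comp
        ((Algebra.TensorProduct.map (ydAuxComulU R cocomm) (AlgHom.id k _)).comp
          (ydAuxComulU R cocomm))) =
        (Algebra.TensorProduct.map (AlgHom.id k _) (ydAuxComulU R cocomm)).comp
          (ydAuxComulU R cocomm) := by
      apply ydAux_hom_ext
      intro x
      have h3 := congrArg (TensorProduct.map (qU R) (TensorProduct.map (qU R) (qU R)))
        (LinearMap.congr_fun R.coassoc x)
      have e1 : ∀ s : C ⊗[k] C, TensorProduct.map (qU R) (TensorProduct.map (qU R) (qU R))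
          (TensorProduct.map LinearMap.id R.comul s) =
          Algebra.TensorProduct.map (AlgHom.id k (UC R)) (ydAuxComulU R cocomm)
            (TensorProduct.map (qU R) (qU R) s) := by
        intro s
        induction s with
        | zero => simp
        | add X Y hX hY => simp only [map_add, hX, hY]
        | tmul a b => simp [hΔ]
      have e0 : ∀ (t : C ⊗[k] C) (b : C),
          TensorProduct.map (qU R) (TensorProduct.map (qU R) (qU R))
          (TensorProduct.assoc k C C C (t ⊗ₜ b)) =
          Algebra.TensorProduct.assoc k k k (UC R) (UC R) (UC R)
            (TensorProduct.map (qU R) (qU R) t ⊗ₜ qU R b) := by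
        intro t b
        induction t with
        | zero => simp
        | add X Y hX hY => simp only [TensorProduct.add_tmul, map_add, hX, hY]
        | tmul a b => simp
      have e2 : ∀ s : C ⊗[k] C, TensorProduct.map (qU R) (TensorProduct.map (qU R) (qU R))
          (TensorProduct.assoc k C C C (TensorProduct.map R.comul LinearMap.id s)) =
          Algebra.TensorProduct.assoc k k k (UC R) (UC R) (UC R)
          (Algebra.TensorProduct.map (ydAuxComulU R cocomm) (AlgHom.id k (UC R))
            (TensorProduct.map (qU R) (qU R) s)) := by
        intro s
        induction s with
        | zero => simp
        | add X Y hX hY => simp only [map_add, hX, hY]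
        | tmul a b => simp [hΔ, e0]
      have h4 := (e2 (R.comul x)).symm.trans (h3.trans (e1 (R.comul x)))
      rw [← hΔ] at h4
      exact h4
    ext1 u
    exact AlgHom.congr_fun this u
  · have : ((Algebra.TensorProduct.lid k (UC R)).toAlgHom.comp
        ((Algebra.TensorProduct.map (ydAuxCounitU R) (AlgHom.id k _)).comp
          (ydAuxComulU R cocomm))) = AlgHom.id k _ := by
      apply ydAux_hom_ext
      intro x
      have e : ∀ s : C ⊗[k] C, Algebra.TensorProduct.lid k (UC R)
          (Algebra.TensorProduct.map (ydAuxCounitU R) (AlgHom.id k (UC R))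
            (TensorProduct.map (qU R) (qU R) s)) =
          qU R (TensorProduct.lid k C (TensorProduct.map R.counit LinearMap.id s)) := by
        intro s
        induction s with
        | zero => simp
        | add X Y hX hY => simp only [map_add, hX, hY]
        | tmul a b => simp [ydAuxCounitU_qU]
      have h4 := e (R.comul x)
      rw [← hΔ, ydAux_counit_sum] at h4
      exact h4
    ext1 u
    exact AlgHom.congr_fun this u
  · have : ((Algebra.TensorProduct.rid k k (UC R)).toAlgHom.comp
        ((Algebra.TensorProduct.map (AlgHom.id k _) (ydAuxCounitU R)).comp
          (ydAuxComulU R cocomm))) = AlgHom.id k _ := by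
      apply ydAux_hom_ext
      intro x
      have e : ∀ s : C ⊗[k] C, Algebra.TensorProduct.rid k k (UC R)
          (Algebra.TensorProduct.map (AlgHom.id k (UC R)) (ydAuxCounitU R)
            (TensorProduct.map (qU R) (qU R) s)) =
          qU R (TensorProduct.rid k C (TensorProduct.map LinearMap.id R.counit s)) := by
        intro s
        induction s with
        | zero => simp
        | add X Y hX hY => simp only [map_add, hX, hY]
        | tmul a b => simp [ydAuxCounitU_qU]
      have h4 := e (R.comul x)
      rw [← hΔ, ydAux_sum_counit] at h4
      exact h4
    ext1 u
    exact AlgHom.congr_fun this u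
  · ext1 x
    exact hΔ x
  · ext1 x
    exact ydAuxCounitU_qU R x
  · apply TensorProduct.ext'
    intro x h
    exact ydAux_module_coalgebra R cocomm x h
  · apply TensorProduct.ext'
    intro a h
    have e : ∀ w : UC R ⊗[k] UC R, LinearMap.mul' k (UC R)
        (TensorProduct.map LinearMap.id (qU R ∘ₗ TensorProduct.lift (ydAuxAct R))
          (TensorProduct.leftComm k C (UC R) (UC R) (a ⊗ₜ w))) = ydAuxTheta R a w := by
      intro w
      induction w with
      | zero => simp
      | add X Y hX hY => simp only [TensorProduct.tmul_add, map_add, hX, hY]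
      | tmul c d => simp [ydAuxTheta_tmul]
    exact (e _).trans (ydAux_yd R cocomm a h)
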